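/- arXiv:2010.02576 — 2 statements merged into one kernel-verified Lean document; each statement's English description precedes it below -/
import Mathlib

section
/- Let (Ω, μ) be a probability space (modeling the random draw of an n-sample) and (Z, ν) a probability space (modeling a random data point). Let L : Ω × Z → ℝ be a jointly measurable function (L(ω, z) is the pointwise excess loss of the predictor selected on sample ω, evaluated at data point z), with L(ω, ·) integrable with respect to ν for every ω, and define the excess risk X : Ω → ℝ by X(ω) = ∫ L(ω, z) dν(z). Fix u > 0, c ∈ (0, 1], ε ≥ 0 and δ ∈ [0, 1], and assume u ≥ ε. Assume the (u, c)-witness condition: for every ω ∈ Ω, ∫ L(ω, z)·1[L(ω, z) ≤ u] dν(z) ≥ c · ∫ L(ω, z) dν(z). Assume the high-probability bound μ{ω : X(ω) > ε} ≤ δ, and that X is integrable with respect to μ. Then the expected excess risk satisfies ∫ X dμ ≤ (1/c)·(ε + (u − ε)·δ). -/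
open MeasureTheory Set

/-- Theorem 1 of the paper: under the `(u, c)`-witness condition, a high-probability
excess-risk bound `μ {ω | X ω > ε} ≤ δ` implies the in-expectation bound
`∫ X dμ ≤ (1/c) * (ε + (u - ε) * δ)`. -/
theorem highProb_implies_inExpectation_witness
    {Ω Z : Type*} [MeasurableSpace Ω] [MeasurableSpace Z]
    (μ : Measure Ω) (ν : Measure Z) [IsProbabilityMeasure μ] [IsProbabilityMeasure ν]
    (L : Ω → Z → ℝ) (hLmeas : Measurable (Function.uncurry L))
    (hLint : ∀ ω, Integrable (L ω) ν)
    (X : Ω → ℝ) (hX : ∀ ω, X ω = ∫ z, L ω z ∂ν)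
    (u c ε δ : ℝ) (hu : 0 < u) (hc : c ∈ Set.Ioc (0 : ℝ) 1)
    (hε : 0 ≤ ε) (hδ : δ ∈ Set.Icc (0 : ℝ) 1) (huε : ε ≤ u)
    (hwitness : ∀ ω, c * ∫ z, L ω z ∂ν ≤
      ∫ z, Set.indicator {z' | L ω z' ≤ u} (L ω) z ∂ν)
    (hhp : μ {ω | X ω > ε} ≤ ENNReal.ofReal δ)
    (hXint : Integrable X μ) :
    ∫ ω, X ω ∂μ ≤ (1 / c) * (ε + (u - ε) * δ) := by
  obtain ⟨hc0, hc1⟩ := hc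
  have hXm : Measurable X := by
    have h : X = fun ω => ∫ z, L ω z ∂ν := funext hX
    rw [h]
    exact (hLmeas.stronglyMeasurable.integral_prod_right).measurable
  have hS : MeasurableSet {ω | X ω > ε} := measurableSet_lt measurable_const hXm
  have hb : ∀ ω, c * X ω ≤ u := by
    intro ω
    rw [hX ω]
    refine (hwitness ω).trans ?_
    have hm : MeasurableSet {z' | L ω z' ≤ u} :=
      measurableSet_le (hLmeas.of_uncurry_left) measurable_const
    calc ∫ z, Set.indicator {z' | L ω z' ≤ u} (L ω) z ∂ν ≤ ∫ _z, u ∂ν := by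
          refine integral_mono ((hLint ω).indicator hm) (integrable_const u) ?_
          intro z
          by_cases hz : L ω z ≤ u
          · simp [Set.indicator, hz]
          · simp [Set.indicator, hz, hu.le]
      _ = u := by simp
  have hδ' : μ.real {ω | X ω > ε} ≤ δ := ENNReal.toReal_le_of_le_ofReal hδ.1 hhp
  have hi : Integrable (Set.indicator {ω | X ω > ε} (fun _ => u - ε)) μ :=
    (integrable_const _).indicator hS
  have key : ∫ ω, c * X ω ∂μ ≤
      ∫ ω, (ε + Set.indicator {ω | X ω > ε} (fun _ => u - ε) ω) ∂μ := by
    refine integral_mono (hXint.const_mul c) ((integrable_const ε).add hi) ?_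
    intro ω
    by_cases h : X ω > ε
    · have := hb ω
      simp [Set.indicator, h, this]
    · have h' : X ω ≤ ε := not_lt.mp h
      have : c * X ω ≤ ε := by nlinarith
      simp [Set.indicator, h, this]
  rw [integral_const_mul, integral_add (integrable_const ε) hi, integral_indicator_const _ hS]
    at key
  simp only [integral_const, probReal_univ, one_smul, smul_eq_mul] at key
  have h2 : μ.real {ω | X ω > ε} * (u - ε) ≤ δ * (u - ε) :=
    mul_le_mul_of_nonneg_right hδ' (sub_nonneg.mpr huε)
  rw [one_div, ← div_eq_inv_mul, le_div_iff₀ hc0]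
  linarith
end

section
/- Let (Ω, μ) and (Z, ν) be probability spaces, L : Ω × Z → ℝ jointly measurable with L(ω, ·) integrable for every ω, and X(ω) = ∫ L(ω, z) dν(z) μ-integrable. Let u > 0, c ∈ (0, 1], and let n be a positive natural number with u·n ≥ 1. Assume the (u, c)-witness condition: for every ω, ∫ L(ω, z)·1[L(ω, z) ≤ u] dν(z) ≥ c·∫ L(ω, z) dν(z). Assume that for every δ ∈ (0, 1], μ{ω : X(ω) > 1/(δ·n)} ≤ δ. Then ∫ X dμ ≤ (1/c)·(2·√(u/n) − 1/n). -/
open MeasureTheory Set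

/-- Conclusion of the paper's "Simple Example": under the `(u, c)`-witness condition
and a high-probability rate `ε(δ, n) = 1/(δ n)`, the expected excess risk is at most
`(1/c) (2 √(u/n) - 1/n)`. -/
theorem simple_example_inExpectation
    {Ω Z : Type*} [MeasurableSpace Ω] [MeasurableSpace Z]
    (μ : Measure Ω) (ν : Measure Z) [IsProbabilityMeasure μ] [IsProbabilityMeasure ν]
    (L : Ω → Z → ℝ) (hLmeas : Measurable (Function.uncurry L))
    (hLint : ∀ ω, Integrable (L ω) ν)
    (X : Ω → ℝ) (hX : ∀ ω, X ω = ∫ z, L ω z ∂ν)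
    (hXint : Integrable X μ)
    (u c : ℝ) (hu : 0 < u) (hc : c ∈ Set.Ioc (0 : ℝ) 1)
    (n : ℕ) (hn : 0 < n) (hun : 1 ≤ u * n)
    (hwitness : ∀ ω, c * ∫ z, L ω z ∂ν ≤
      ∫ z, Set.indicator {z' | L ω z' ≤ u} (L ω) z ∂ν)
    (hhp : ∀ δ ∈ Set.Ioc (0 : ℝ) 1,
      μ {ω | X ω > 1 / (δ * n)} ≤ ENNReal.ofReal δ) :
    ∫ ω, X ω ∂μ ≤ (1 / c) * (2 * Real.sqrt (u / n) - 1 / n) := by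
  obtain ⟨hc0, hc1⟩ := hc
  have hn' : (0:ℝ) < n := by exact_mod_cast hn
  have hbd : ∀ ω, c * X ω ≤ u := by
    intro ω
    rw [hX ω]
    refine (hwitness ω).trans ?_
    have hm : MeasurableSet {z' | L ω z' ≤ u} :=
      (hLmeas.comp measurable_prodMk_left) measurableSet_Iic
    have h := integral_mono (μ := ν) ((hLint ω).indicator hm) (integrable_const u) (fun z => by
      by_cases hz : z ∈ {z' | L ω z' ≤ u}
      · simp only [Set.indicator_of_mem hz]; exact hz
      · simp only [Set.indicator_of_notMem hz]; exact hu.le)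
    simpa using h
  set s := Real.sqrt (u * n) with hs
  have hs1 : 1 ≤ s := by rw [hs]; exact Real.one_le_sqrt.mpr hun
  have hs0 : 0 < s := by linarith
  have hss : s * s = u * n := Real.mul_self_sqrt (by positivity)
  have hsq : Real.sqrt (u / n) = s / n := by
    rw [Real.sqrt_eq_iff_mul_self_eq (by positivity) (by positivity)]
    field_simp
    nlinarith
  have hδ : (1 / s) ∈ Set.Ioc (0:ℝ) 1 := ⟨by positivity, by rw [div_le_one hs0]; exact hs1⟩
  have hp := hhp (1 / s) hδ
  have ha : 1 / (1 / s * n) = s / n := by field_simp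
  rw [ha] at hp
  set B : Set Ω := {ω | X ω > s / n} with hB
  have hBm : NullMeasurableSet B μ :=
    nullMeasurableSet_lt aemeasurable_const hXint.aemeasurable
  have hpr : μ.real B ≤ 1 / s := ENNReal.toReal_le_of_le_ofReal hδ.1.le hp
  have hau : s / n ≤ u := by
    rw [div_le_iff₀ hn']; nlinarith
  have hi : Integrable (B.indicator (fun _ => u - s / n)) μ :=
    (integrable_const (u - s / n)).indicator₀ hBm
  have key : ∫ ω, c * X ω ∂μ ≤ ∫ ω, (s / n + B.indicator (fun _ => u - s / n) ω) ∂μ := by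
    refine integral_mono (hXint.const_mul c) ((integrable_const _).add hi) (fun ω => ?_)
    by_cases hω : ω ∈ B
    · simp only [Set.indicator_of_mem hω]; linarith [hbd ω]
    · simp only [Set.indicator_of_notMem hω]
      have h1 : X ω ≤ s / n := not_lt.mp hω
      have h2 : 0 < s / n := by positivity
      nlinarith
  rw [integral_const_mul, integral_add (integrable_const _) hi, integral_indicator₀ hBm] at key
  simp only [integral_const, smul_eq_mul, probReal_univ, one_mul,
    measureReal_restrict_apply_univ] at key
  have h3 : μ.real B * (u - s / n) ≤ 1 / s * (u - s / n) :=
    mul_le_mul_of_nonneg_right hpr (by linarith)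
  have h4 : 1 / s * (u - s / n) = s / n - 1 / n := by
    field_simp
    nlinarith
  rw [hsq, one_div_mul_eq_div, le_div_iff₀ hc0]
  linarith
end
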